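/- Let X be an edge-transitive simplicial surface such that Aut(X) has exactly two orbits on the faces X_2. Let v be a vertex of X of degree n and let (F_1,…,F_n) be an umbrella of v. Then there exists an automorphism φ in Aut(X) with φ(v) = v and φ(F_i) = F_{i+2} for all i (indices mod n). -/

import Mathlib

open Finset

/-- A (connected) simplicial surface: a finite, downward-closed family of nonempty subsets of
the vertex set `α`, pure of dimension 2, such that every edge lies in exactly two faces,
the faces around each vertex form an umbrella, and the surface is connected. -/
structure SimplicialSurface (α : Type*) [Fintype α] [DecidableEq α] where
  cplx : Finset (Finset α)
  nonempty_of_mem : ∀ s ∈ cplx, s.Nonempty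
  down_closed : ∀ s ∈ cplx, ∀ t : Finset α, t.Nonempty → t ⊆ s → t ∈ cplx
  card_le_three : ∀ s ∈ cplx, s.card ≤ 3
  pure_two : ∀ s ∈ cplx, ∃ F ∈ cplx, s ⊆ F ∧ F.card = 3
  dim_two : ∃ F ∈ cplx, F.card = 3
  all_vertices : ∀ x : α, {x} ∈ cplx
  edge_in_two_faces : ∀ e ∈ cplx, e.card = 2 →
    (cplx.filter (fun F => e ⊆ F ∧ F.card = 3)).card = 2
  umbrella_exists : ∀ v : α, ∃ n : ℕ, 0 < n ∧ ∃ u : Fin n → Finset α,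
    Function.Injective u ∧
    (∀ i, u i ∈ cplx ∧ (u i).card = 3 ∧ v ∈ u i) ∧
    (∀ F ∈ cplx, F.card = 3 → v ∈ F → ∃ i, u i = F) ∧
    (∀ i : Fin n, (u i ∩ u (finRotate n i)).card = 2)
  connected : ∀ F ∈ cplx, ∀ G ∈ cplx, F.card = 3 → G.card = 3 →
    Relation.ReflTransGen (fun A B => A ∈ cplx ∧ B ∈ cplx ∧ (A ∩ B).card = 2) F G

lemma Equiv.Perm.finset_image_mul {α : Type*} [DecidableEq α] (π σ : Equiv.Perm α)
    (s : Finset α) :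
    Finset.image ⇑(π * σ) s = Finset.image ⇑π (Finset.image ⇑σ s) := by
  rw [Finset.image_image]
  rfl

namespace SimplicialSurface

variable {α : Type*} [Fintype α] [DecidableEq α] (X : SimplicialSurface α)

/-- The set `X_2` of faces of `X`, i.e. the 3-element members. -/
def faces : Finset (Finset α) := X.cplx.filter fun s => s.card = 3

/-- The set `X_1` of edges of `X`, i.e. the 2-element members. -/
def edges : Finset (Finset α) := X.cplx.filter fun s => s.card = 2

/-- The automorphism group of `X`: permutations of the vertices mapping members of the
complex to members of the complex. -/
def aut : Subgroup (Equiv.Perm α) where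
  carrier := { π | ∀ s : Finset α, s ∈ X.cplx ↔ Finset.image ⇑π s ∈ X.cplx }
  one_mem' := by intro s; simp
  mul_mem' := by
    intro π σ hπ hσ s
    rw [Equiv.Perm.finset_image_mul, ← hπ (Finset.image ⇑σ s), ← hσ s]
  inv_mem' := by
    intro π hπ s
    have h2 : Finset.image ⇑π (Finset.image ⇑π⁻¹ s) = s := by ext x; simp
    have h := hπ (Finset.image ⇑π⁻¹ s)
    rw [h2] at h
    exact h.symm

/-- The setwise stabiliser in `Aut(X)` of a set `s` of vertices. -/
def stab (s : Finset α) : Subgroup (Equiv.Perm α) where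
  carrier := { π | π ∈ X.aut ∧ Finset.image ⇑π s = s }
  one_mem' := ⟨X.aut.one_mem, by simp⟩
  mul_mem' := by
    rintro π σ ⟨hπ, hπs⟩ ⟨hσ, hσs⟩
    exact ⟨X.aut.mul_mem hπ hσ, by rw [Equiv.Perm.finset_image_mul, hσs, hπs]⟩
  inv_mem' := by
    rintro π ⟨hπ, hπs⟩
    refine ⟨X.aut.inv_mem hπ, ?_⟩
    calc Finset.image ⇑π⁻¹ s = Finset.image ⇑π⁻¹ (Finset.image ⇑π s) := by rw [hπs]
      _ = s := by ext x; simp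

/-- `X` is edge-transitive if `Aut(X)` acts transitively on the edges `X_1`. -/
def EdgeTransitive : Prop :=
  ∀ e₁ ∈ X.edges, ∀ e₂ ∈ X.edges, ∃ π ∈ X.aut, Finset.image ⇑π e₁ = e₂

/-- The orbit of a set of vertices under `Aut(X)`. -/
def orbit (s : Finset α) : Set (Finset α) := { t | ∃ π ∈ X.aut, Finset.image ⇑π s = t }

/-- The set of `Aut(X)`-orbits on the faces of `X`. -/
def faceOrbits : Set (Set (Finset α)) := { O | ∃ F ∈ X.faces, O = X.orbit F }

/-- The set of `Aut(X)`-orbits on the vertices of `X`. -/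
def vertexOrbits : Set (Set α) := { O | ∃ v : α, O = { w | ∃ π ∈ X.aut, π v = w } }

/-- The degree of a vertex: the number of faces containing it. -/
def degree (v : α) : ℕ := (X.faces.filter fun F => v ∈ F).card

end SimplicialSurface

/-!
Every face contains an edge, so edge-transitivity makes all faces equivalent as soon as two adjacent
faces are. With two face orbits, an automorphism carrying one edge of a face `F` to another edge of
`F` therefore maps `F` to itself; hence the stabiliser of `F` is transitive on the edges of `F`, and
so it contains the rotations of `F`.

Let `b` be the second endpoint of `F₂ ∩ F₃`. One rotation of `F₂` sends `v` to `b` and `F₁` to `F₃`;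
one rotation of `F₃` sends `b` back to `v` and `F₂` to `F₄`. Their composite fixes `v` and maps
`F₁, F₂` to `F₃, F₄`, which determines it on the whole umbrella, since two successive faces of an
umbrella determine the next one.
-/

namespace SimplicialSurface

variable {α : Type*} [Fintype α] [DecidableEq α] {X : SimplicialSurface α}
  {v b : α} {e e' F G H H' : Finset α} {π : Equiv.Perm α}

lemma mem_faces : F ∈ X.faces ↔ F ∈ X.cplx ∧ F.card = 3 := Finset.mem_filter

lemma mem_edges : e ∈ X.edges ↔ e ∈ X.cplx ∧ e.card = 2 := Finset.mem_filter

lemma mem_edges_of_subset (hF : F ∈ X.faces) (heF : e ⊆ F) (he : e.card = 2) : e ∈ X.edges :=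
  mem_edges.2 ⟨X.down_closed F (mem_faces.1 hF).1 e (Finset.card_pos.1 (by omega)) heF, he⟩

lemma image_mem_faces (hπ : π ∈ X.aut) (hF : F ∈ X.faces) : F.image π ∈ X.faces :=
  mem_faces.2 ⟨(hπ F).1 (mem_faces.1 hF).1,
    (F.card_image_of_injective π.injective).trans (mem_faces.1 hF).2⟩

lemma eq_or_eq_of_edge_subset (he : e ∈ X.edges) (hF : F ∈ X.faces) (hG : G ∈ X.faces)
    (hH : H ∈ X.faces) (heF : e ⊆ F) (heG : e ⊆ G) (heH : e ⊆ H) (hFG : F ≠ G) :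
    H = F ∨ H = G := by
  rw [mem_edges] at he
  rw [mem_faces] at hF hG hH
  have hpair : {F, G} = X.cplx.filter (fun K => e ⊆ K ∧ K.card = 3) :=
    Finset.eq_of_subset_of_card_le (by grind)
      (by rw [X.edge_in_two_faces e he.1 he.2, Finset.card_pair hFG])
  have hHpair : H ∈ ({F, G} : Finset (Finset α)) :=
    hpair ▸ Finset.mem_filter.2 ⟨hH.1, heH, hH.2⟩
  simpa using hHpair

lemma orbit_image (hπ : π ∈ X.aut) (s : Finset α) : X.orbit (s.image π) = X.orbit s := by
  ext t
  constructor
  · rintro ⟨σ, hσ, rfl⟩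
    exact ⟨σ * π, X.aut.mul_mem hσ hπ, Equiv.Perm.finset_image_mul σ π s⟩
  · rintro ⟨σ, hσ, rfl⟩
    exact ⟨σ * π⁻¹, X.aut.mul_mem hσ (X.aut.inv_mem hπ), by
      rw [← Equiv.Perm.finset_image_mul, inv_mul_cancel_right]⟩

lemma apply_mem_of_mem_stab (hπ : π ∈ X.stab F) {x : α} (hx : x ∈ F) : π x ∈ F :=
  hπ.2 ▸ Finset.mem_image_of_mem π hx

namespace EdgeTransitive

lemma subsingleton_faceOrbits (hX : X.EdgeTransitive) (he : e ∈ X.edges) (hF : F ∈ X.faces)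
    (hG : G ∈ X.faces) (heF : e ⊆ F) (heG : e ⊆ G) (hFG : F ≠ G)
    (horbit : X.orbit F = X.orbit G) : X.faceOrbits.Subsingleton := by
  have orbit_eq : ∀ H ∈ X.faces, X.orbit H = X.orbit F := by
    intro H hH
    obtain ⟨d, hdH, hd⟩ := Finset.exists_subset_card_eq (s := H) (n := 2)
      (by rw [(mem_faces.1 hH).2]; omega)
    have hdX := mem_edges_of_subset hH hdH hd
    obtain ⟨π, hπ, rfl⟩ := hX e he d hdX
    rcases eq_or_eq_of_edge_subset hdX (image_mem_faces hπ hF) (image_mem_faces hπ hG) hH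
      (Finset.image_subset_image heF) (Finset.image_subset_image heG) hdH
      ((Finset.image_injective π.injective).ne hFG) with rfl | rfl
    · exact orbit_image hπ F
    · exact (orbit_image hπ G).trans horbit.symm
  rintro _ ⟨H, hH, rfl⟩ _ ⟨K, hK, rfl⟩
  rw [orbit_eq H hH, orbit_eq K hK]

lemma exists_mem_stab_image_eq (hX : X.EdgeTransitive) (hO : X.faceOrbits.Nontrivial)
    (hF : F ∈ X.faces) (he : e ∈ X.edges) (he' : e' ∈ X.edges) (heF : e ⊆ F) (heF' : e' ⊆ F) :
    ∃ π ∈ X.stab F, e.image π = e' := by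
  obtain ⟨π, hπ, rfl⟩ := hX e he e' he'
  refine ⟨π, ⟨hπ, ?_⟩, rfl⟩
  by_contra hne
  exact Set.not_subsingleton_iff.2 hO <| hX.subsingleton_faceOrbits he' (image_mem_faces hπ hF) hF
    (Finset.image_subset_image heF) heF' hne (orbit_image hπ F)

lemma exists_mem_stab_apply_eq (hX : X.EdgeTransitive) (hO : X.faceOrbits.Nontrivial)
    (hF : F ∈ X.faces) {x y : α} (hx : x ∈ F) (hy : y ∈ F) : ∃ π ∈ X.stab F, π x = y := by
  have erase_mem_edges : ∀ z ∈ F, F.erase z ∈ X.edges := fun z hz =>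
    mem_edges_of_subset hF (F.erase_subset z) (by
      rw [Finset.card_erase_of_mem hz, (mem_faces.1 hF).2])
  obtain ⟨π, hπ, himage⟩ := hX.exists_mem_stab_image_eq hO hF (erase_mem_edges x hx)
    (erase_mem_edges y hy) (F.erase_subset x) (F.erase_subset y)
  rw [Finset.image_erase π.injective, hπ.2] at himage
  exact ⟨π, hπ, (Finset.erase_inj F (apply_mem_of_mem_stab hπ hx)).1 himage⟩

-- If neither of two elements of the stabiliser realising `a ↦ b` and `b ↦ c` is a rotation, then
-- they are the transpositions `(a b)` and `(b c)`, whose product is a rotation.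
lemma exists_rotation (hX : X.EdgeTransitive) (hO : X.faceOrbits.Nontrivial) {a b c : α}
    (hF : {a, b, c} ∈ X.faces) : ∃ π ∈ X.stab {a, b, c}, π a = b ∧ π b = c ∧ π c = a := by
  obtain ⟨σ, hσ, hσa⟩ := hX.exists_mem_stab_apply_eq hO hF (x := a) (y := b) (by simp) (by simp)
  obtain ⟨τ, hτ, hτb⟩ := hX.exists_mem_stab_apply_eq hO hF (x := b) (y := c) (by simp) (by simp)
  have hcard := (mem_faces.1 hF).2
  have hab : a ≠ b := by grind
  have hbc : b ≠ c := by grind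
  have hac : a ≠ c := by grind
  have hσ_cases : (σ b = c ∧ σ c = a) ∨ (σ b = a ∧ σ c = c) := by
    have hσb_mem := apply_mem_of_mem_stab hσ (x := b) (by simp)
    have hσc_mem := apply_mem_of_mem_stab hσ (x := c) (by simp)
    grind [σ.injective.ne hab, σ.injective.ne hbc, σ.injective.ne hac]
  have hτ_cases : (τ a = b ∧ τ c = a) ∨ (τ a = a ∧ τ c = b) := by
    have hτa_mem := apply_mem_of_mem_stab hτ (x := a) (by simp)
    have hτc_mem := apply_mem_of_mem_stab hτ (x := c) (by simp)
    grind [τ.injective.ne hab, τ.injective.ne hbc, τ.injective.ne hac]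
  obtain ⟨hσb, hσc⟩ | ⟨hσb, hσc⟩ := hσ_cases
  · exact ⟨σ, hσ, hσa, hσb, hσc⟩
  obtain ⟨hτa, hτc⟩ | ⟨hτa, hτc⟩ := hτ_cases
  · exact ⟨τ, hτ, hτa, hτb, hτc⟩
  exact ⟨σ * τ, (X.stab _).mul_mem hσ hτ, by simp [*], by simp [*], by simp [*]⟩

end EdgeTransitive

/-- `F`, `G`, `H` are consecutive faces of an umbrella of `v`, read in either direction; `F ≠ H`
records that the umbrella does not turn back at `G`. -/
structure Consecutive (X : SimplicialSurface α) (v : α) (F G H : Finset α) : Prop where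
  left_mem : F ∈ X.faces
  middle_mem : G ∈ X.faces
  right_mem : H ∈ X.faces
  apex_mem_left : v ∈ F
  apex_mem_middle : v ∈ G
  apex_mem_right : v ∈ H
  card_left_inter : (F ∩ G).card = 2
  card_inter_right : (G ∩ H).card = 2
  left_ne_right : F ≠ H

lemma ne_of_card_inter (hF : F ∈ X.faces) (h : (F ∩ G).card = 2) : F ≠ G := by
  rintro rfl
  rw [Finset.inter_self, (mem_faces.1 hF).2] at h
  omega

namespace Consecutive

lemma symm (h : X.Consecutive v F G H) : X.Consecutive v H G F where
  left_mem := h.right_mem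
  middle_mem := h.middle_mem
  right_mem := h.left_mem
  apex_mem_left := h.apex_mem_right
  apex_mem_middle := h.apex_mem_middle
  apex_mem_right := h.apex_mem_left
  card_left_inter := Finset.inter_comm G H ▸ h.card_inter_right
  card_inter_right := Finset.inter_comm F G ▸ h.card_left_inter
  left_ne_right := h.left_ne_right.symm

lemma image (h : X.Consecutive v F G H) (hπ : π ∈ X.aut) :
    X.Consecutive (π v) (F.image π) (G.image π) (H.image π) where
  left_mem := image_mem_faces hπ h.left_mem
  middle_mem := image_mem_faces hπ h.middle_mem
  right_mem := image_mem_faces hπ h.right_mem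
  apex_mem_left := Finset.mem_image_of_mem π h.apex_mem_left
  apex_mem_middle := Finset.mem_image_of_mem π h.apex_mem_middle
  apex_mem_right := Finset.mem_image_of_mem π h.apex_mem_right
  card_left_inter := by
    rw [← Finset.image_inter _ _ π.injective, Finset.card_image_of_injective _ π.injective,
      h.card_left_inter]
  card_inter_right := by
    rw [← Finset.image_inter _ _ π.injective, Finset.card_image_of_injective _ π.injective,
      h.card_inter_right]
  left_ne_right := (Finset.image_injective π.injective).ne h.left_ne_right

lemma middle_ne_left (h : X.Consecutive v F G H) : G ≠ F :=
  (ne_of_card_inter h.left_mem h.card_left_inter).symm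

lemma exists_inter_right_eq_pair (h : X.Consecutive v F G H) : ∃ b, G ∩ H = {v, b} := by
  have hv : v ∈ G ∩ H := Finset.mem_inter.2 ⟨h.apex_mem_middle, h.apex_mem_right⟩
  obtain ⟨b, hb⟩ := Finset.card_eq_one.1
    (by rw [Finset.card_erase_of_mem hv, h.card_inter_right] : ((G ∩ H).erase v).card = 1)
  exact ⟨b, by rw [← hb, Finset.insert_erase hv]⟩

lemma inter_right_mem_edges (h : X.Consecutive v F G H) : G ∩ H ∈ X.edges :=
  mem_edges_of_subset h.middle_mem Finset.inter_subset_left h.card_inter_right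

lemma eq_right_of_inter_subset (h : X.Consecutive v F G H) (hH' : H' ∈ X.faces) (hne : H' ≠ G)
    (hsub : G ∩ H ⊆ H') : H' = H :=
  (eq_or_eq_of_edge_subset h.inter_right_mem_edges h.middle_mem h.right_mem hH'
    Finset.inter_subset_left Finset.inter_subset_right hsub h.symm.middle_ne_left).resolve_left hne

lemma not_inter_right_subset_left (h : X.Consecutive v F G H) : ¬ G ∩ H ⊆ F := fun hsub =>
  h.left_ne_right <| h.eq_right_of_inter_subset h.left_mem h.middle_ne_left.symm hsub

lemma inter_union_inter_eq_middle (h : X.Consecutive v F G H) : F ∩ G ∪ G ∩ H = G := by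
  refine Finset.eq_of_subset_of_card_le
    (Finset.union_subset Finset.inter_subset_right Finset.inter_subset_left) ?_
  have hlt : (F ∩ G).card < (F ∩ G ∪ G ∩ H).card := Finset.card_lt_card <|
    Finset.ssubset_iff_subset_ne.2 ⟨Finset.subset_union_left, fun heq =>
      h.not_inter_right_subset_left <|
        (Finset.union_eq_left.1 heq.symm).trans Finset.inter_subset_left⟩
  rw [h.card_left_inter] at hlt
  rw [(mem_faces.1 h.middle_mem).2]
  omega

lemma right_unique (h : X.Consecutive v F G H) (h' : X.Consecutive v F G H') : H = H' := by
  obtain ⟨b, hb⟩ := h.exists_inter_right_eq_pair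
  have hbF : b ∉ F := fun hbF => h.not_inter_right_subset_left <| by
    rw [hb, Finset.insert_subset_iff, Finset.singleton_subset_iff]
    exact ⟨h.apex_mem_left, hbF⟩
  have hbG : b ∈ F ∩ G ∪ G ∩ H' := by
    have hbGH : b ∈ G ∩ H := by simp [hb]
    exact h'.inter_union_inter_eq_middle.symm ▸ Finset.mem_of_mem_inter_left hbGH
  have hbH' : b ∈ H' := by grind
  refine (h.eq_right_of_inter_subset h'.right_mem h'.symm.middle_ne_left.symm ?_).symm
  rw [hb, Finset.insert_subset_iff, Finset.singleton_subset_iff]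
  exact ⟨h'.apex_mem_right, hbH'⟩

lemma exists_mem_stab_middle (h : X.Consecutive v F G H) (hX : X.EdgeTransitive)
    (hO : X.faceOrbits.Nontrivial) (hb : G ∩ H = {v, b}) :
    ∃ π ∈ X.stab G, π v = b ∧ F.image π = H := by
  obtain ⟨a, ha⟩ := h.symm.exists_inter_right_eq_pair
  rw [Finset.inter_comm, Finset.pair_comm] at ha
  have hG : G = {a, v, b} := by
    rw [← h.inter_union_inter_eq_middle, ha, hb]
    grind
  obtain ⟨π, hπ, hπa, hπv, -⟩ := hX.exists_rotation hO (hG ▸ h.middle_mem)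
  rw [← hG] at hπ
  refine ⟨π, hπ, hπv, h.eq_right_of_inter_subset (image_mem_faces hπ.1 h.left_mem) ?_ ?_⟩
  · intro hFG
    exact h.middle_ne_left.symm (Finset.image_injective π.injective (hFG.trans hπ.2.symm))
  · calc G ∩ H = (F ∩ G).image π := by
          rw [hb, ha, Finset.image_insert, Finset.image_singleton, hπa, hπv]
      _ ⊆ F.image π := Finset.image_subset_image Finset.inter_subset_left

end Consecutive

lemma eq_of_consecutive {f g : ℕ → Finset α}
    (hf : ∀ k, X.Consecutive v (f k) (f (k + 1)) (f (k + 2)))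
    (hg : ∀ k, X.Consecutive v (g k) (g (k + 1)) (g (k + 2)))
    (h0 : f 0 = g 0) (h1 : f 1 = g 1) (k : ℕ) : f k = g k := by
  induction k using Nat.twoStepInduction with
  | zero => exact h0
  | one => exact h1
  | more k hk hk1 => exact (hf k).right_unique (hk ▸ hk1 ▸ hg k)

theorem EdgeTransitive.exists_image_eq_add_two (hX : X.EdgeTransitive)
    (hO : X.faceOrbits.Nontrivial) {f : ℕ → Finset α}
    (hf : ∀ k, X.Consecutive v (f k) (f (k + 1)) (f (k + 2))) :
    ∃ φ ∈ X.aut, φ v = v ∧ ∀ k, (f k).image φ = f (k + 2) := by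
  obtain ⟨b, hb⟩ := (hf 0).exists_inter_right_eq_pair
  obtain ⟨ρ, hρ, hρv, hρf⟩ := (hf 0).exists_mem_stab_middle hX hO hb
  obtain ⟨τ, hτ, hτv, hτf⟩ :=
    (hf 1).symm.exists_mem_stab_middle hX hO (Finset.inter_comm (f 1) (f 2) ▸ hb)
  have hφ : τ⁻¹ * ρ ∈ X.aut := X.aut.mul_mem (X.aut.inv_mem hτ.1) hρ.1
  have hφv : (τ⁻¹ * ρ) v = v := by
    rw [Equiv.Perm.mul_apply, hρv, Equiv.Perm.inv_eq_iff_eq, hτv]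
  refine ⟨τ⁻¹ * ρ, hφ, hφv, eq_of_consecutive (fun k => hφv ▸ (hf k).image hφ)
    (fun k => hf (k + 2)) ?_ ?_⟩
  · rw [Equiv.Perm.finset_image_mul, hρf]
    exact ((X.stab _).inv_mem hτ).2
  · rw [Equiv.Perm.finset_image_mul, hρ.2, ← hτf, ← Equiv.Perm.finset_image_mul]
    simp

lemma consecutive_of_umbrella {m : ℕ} {u : Fin (m + 3) → Finset α}
    (hinj : Function.Injective u) (hmem : ∀ i, u i ∈ X.faces ∧ v ∈ u i)
    (hconsec : ∀ i, (u i ∩ u (i + 1)).card = 2) (i : Fin (m + 3)) :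
    X.Consecutive v (u i) (u (i + 1)) (u (i + 1 + 1)) where
  left_mem := (hmem i).1
  middle_mem := (hmem (i + 1)).1
  right_mem := (hmem (i + 1 + 1)).1
  apex_mem_left := (hmem i).2
  apex_mem_middle := (hmem (i + 1)).2
  apex_mem_right := (hmem (i + 1 + 1)).2
  card_left_inter := hconsec i
  card_inter_right := hconsec (i + 1)
  left_ne_right := hinj.ne <| by
    rw [add_assoc, ne_comm, Ne, add_eq_left, Fin.ext_iff]
    simp [Fin.val_add, Nat.mod_eq_of_lt]

open Fin.NatCast in
theorem EdgeTransitive.exists_image_umbrella_eq (hX : X.EdgeTransitive)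
    (hO : X.faceOrbits.Nontrivial) {m : ℕ} {u : Fin (m + 3) → Finset α}
    (hinj : Function.Injective u) (hmem : ∀ i, u i ∈ X.faces ∧ v ∈ u i)
    (hconsec : ∀ i, (u i ∩ u (i + 1)).card = 2) :
    ∃ φ ∈ X.aut, φ v = v ∧ ∀ i, (u i).image φ = u (i + 1 + 1) := by
  have hf : ∀ k : ℕ, X.Consecutive v (u k) (u (k + 1 : ℕ)) (u (k + 1 + 1 : ℕ)) := fun k => by
    simpa only [Nat.cast_add, Nat.cast_one] using consecutive_of_umbrella hinj hmem hconsec k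
  obtain ⟨φ, hφ, hφv, hshift⟩ := hX.exists_image_eq_add_two hO (f := fun k : ℕ => u k) hf
  refine ⟨φ, hφ, hφv, fun i => ?_⟩
  simpa [add_assoc, one_add_one_eq_two] using hshift i

end SimplicialSurface

/-- Let `X` be an edge-transitive simplicial surface such that `Aut(X)` has exactly two
orbits on the faces, let `v` be a vertex of degree `n` and `(F_1, …, F_n)` an umbrella of
`v`. Then some automorphism `φ` of `X` fixes `v` and satisfies `φ(F_i) = F_{i+2}` for all
`i` (indices mod `n`). -/
theorem exists_umbrella_shift
    {α : Type*} [Fintype α] [DecidableEq α] (X : SimplicialSurface α)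
    (hX : X.EdgeTransitive) (h2 : X.faceOrbits.ncard = 2)
    (v : α) (n : ℕ) (hn : 0 < n) (u : Fin n → Finset α)
    (hinj : Function.Injective u)
    (hmem : ∀ i, u i ∈ X.faces ∧ v ∈ u i)
    (hsurj : ∀ F ∈ X.faces, v ∈ F → ∃ i, u i = F)
    (hconsec : ∀ i : Fin n, (u i ∩ u (finRotate n i)).card = 2) :
    ∃ φ ∈ X.aut, φ v = v ∧
      ∀ i : Fin n, Finset.image ⇑φ (u i) = u (finRotate n (finRotate n i)) := by
  have hO : X.faceOrbits.Nontrivial := Set.one_lt_ncard_iff_nontrivial.1 (by omega)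
  obtain _ | _ | _ | m := n
  · omega
  · exact absurd rfl (SimplicialSurface.ne_of_card_inter (hmem 0).1 (hconsec 0))
  · have hrotate : ∀ i : Fin 2, finRotate 2 (finRotate 2 i) = i := by decide
    exact ⟨1, X.aut.one_mem, rfl, fun i => by
      rw [hrotate i, Equiv.Perm.coe_one, Finset.image_id]⟩
  · simp only [finRotate_apply] at hconsec ⊢
    exact hX.exists_image_umbrella_eq hO hinj hmem hconsec
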